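/- Let f be a positive integer and q = 2^f. Then the symplectic group Sp_4(F_q) contains an element h of order q + 1 whose centralizer in Sp_4(F_q) has cardinality exactly (q + 1)^2 if and only if f > 1. -/

import Mathlib

namespace Sp4aux
section

def seq {F : Type*} [Field F] (s : F) : ℕ → F × F
  | 0 => (1, 0)
  | n + 1 => ((seq s n).2, (seq s n).1 + s * (seq s n).2)

theorem field_part_aux (f : ℕ) (hf : 1 < f) (F : Type*) [Field F] [Fintype F] [CharP F 2]
    (hF : Fintype.card F = 2 ^ f) (K : Type*) [Field K] [Algebra F K] (ζ : K)
    (hζ : IsPrimitiveRoot ζ (2 ^ f + 1)) :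
    ∃ s : F, s ≠ 0 ∧ s ≠ 1 ∧
      Nat.card {p : F × F // p.1 ^ 2 + s * p.1 * p.2 + p.2 ^ 2 = 1} = 2 ^ f + 1 ∧
      (∀ n, seq s n = (1, 0) ↔ 2 ^ f + 1 ∣ n) := by
  have h4 : 4 ≤ 2 ^ f := by
    calc 4 = 2 ^ 2 := by norm_num
      _ ≤ 2 ^ f := Nat.pow_le_pow_right (by norm_num) hf
  have : CharP K 2 := charP_of_injective_algebraMap (algebraMap F K).injective 2
  have h2 : (2 : K) = 0 := CharTwo.two_eq_zero
  have hζ1 : ζ ^ (2 ^ f) * ζ = 1 := by rw [← pow_succ]; exact hζ.pow_eq_one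
  have hζ0 : ζ ≠ 0 := hζ.ne_zero (by omega)
  have hfr : ∀ x y : K, (x + y) ^ (2 ^ f) = x ^ (2 ^ f) + y ^ (2 ^ f) :=
    fun x y => add_pow_char_pow x y 2 f
  have hq : ∀ a : F, (algebraMap F K a) ^ (2 ^ f) = algebraMap F K a := by
    intro a
    rw [← map_pow, ← hF, FiniteField.pow_card]
  have hsurj : ∀ x : K, x ^ (2 ^ f) = x → ∃ a, algebraMap F K a = x := by
    intro x hx
    classical
    have hr := FiniteField.roots_X_pow_card_sub_X F
    have hdeg := FiniteField.X_pow_card_sub_X_natDegree_eq F (Fintype.one_lt_card (α := F))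
    have hmon : (Polynomial.X ^ Fintype.card F - Polynomial.X : Polynomial F).Monic := by
      apply Polynomial.monic_X_pow_sub
      rw [Polynomial.degree_X]
      exact_mod_cast Fintype.one_lt_card (α := F)
    have hp := Polynomial.prod_multiset_X_sub_C_of_monic_of_roots_card_eq hmon (by
      rw [hr, hdeg]; simp)
    rw [hr] at hp
    have hev := congrArg (Polynomial.eval₂ (algebraMap F K) x) hp
    rw [Polynomial.eval₂_sub, Polynomial.eval₂_pow, Polynomial.eval₂_X, hF, hx, sub_self] at hev
    change Polynomial.eval₂ (algebraMap F K) x (∏ a : F, (Polynomial.X - Polynomial.C a)) = 0 at hev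
    rw [Polynomial.eval₂_finsetProd, Finset.prod_eq_zero_iff] at hev
    obtain ⟨a, -, ha⟩ := hev
    refine ⟨a, ?_⟩
    simp only [Polynomial.eval₂_sub, Polynomial.eval₂_X, Polynomial.eval₂_C] at ha
    exact (sub_eq_zero.1 ha).symm
  have hζq : ζ ^ (2 ^ f) = ζ⁻¹ := eq_inv_of_mul_eq_one_left hζ1
  obtain ⟨s, hs⟩ := hsurj (ζ + ζ⁻¹) (by
    rw [hfr, inv_pow, hζq, inv_inv, add_comm])
  have hnpow : ∀ n, 0 < n → n < 5 → ζ ^ n ≠ 1 := by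
    intro n h0 h5 h
    exact hζ.pow_ne_one_of_pos_of_lt h0.ne' (by omega) h
  have hζs : ζ ^ 2 = 1 + algebraMap F K s * ζ := by
    rw [hs]; field_simp; linear_combination (-1 : K) * h2
  have hnotin : ∀ a, algebraMap F K a ≠ ζ := by
    intro a ha
    apply hnpow 2 (by norm_num) (by norm_num)
    rw [pow_two, ← hζ1, ← ha, hq]
  have hli : ∀ x y : F, algebraMap F K x + algebraMap F K y * ζ = 0 → x = 0 ∧ y = 0 := by
    intro x y h
    have hy : y = 0 := by
      by_contra hy
      apply hnotin (- x / y)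
      have : algebraMap F K y ≠ 0 := by simpa using hy
      rw [map_div₀, map_neg]
      field_simp
      linear_combination -h
    subst hy
    simpa using h
  have hli2 : ∀ x y x' y' : F, algebraMap F K x + algebraMap F K y * ζ =
      algebraMap F K x' + algebraMap F K y' * ζ → x = x' ∧ y = y' := by
    intro x y x' y' h
    have := hli (x - x') (y - y') (by rw [map_sub, map_sub]; linear_combination h)
    exact ⟨sub_eq_zero.1 this.1, sub_eq_zero.1 this.2⟩
  have hseq : ∀ n, ζ ^ n = algebraMap F K (seq s n).1 + algebraMap F K (seq s n).2 * ζ := by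
    intro n
    induction n with
    | zero => simp [seq]
    | succ n ih =>
      rw [pow_succ, ih]
      simp only [seq, map_add, map_mul]
      linear_combination algebraMap F K (seq s n).2 * hζs
  have hnorm : ∀ x y : F, (algebraMap F K x + algebraMap F K y * ζ) ^ (2 ^ f + 1) =
      algebraMap F K (x ^ 2 + s * x * y + y ^ 2) := by
    intro x y
    rw [pow_succ, hfr, mul_pow, hq, hq, hζq]
    simp only [map_add, map_mul, map_pow]
    rw [hs]
    field_simp
    ring
  refine ⟨s, ?_, ?_, ?_, ?_⟩
  · rintro rfl
    apply hnpow 2 (by norm_num) (by norm_num)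
    rw [hζs]; simp
  · rintro rfl
    apply hnpow 3 (by norm_num) (by norm_num)
    rw [map_one] at hζs
    linear_combination (ζ + 1) * hζs + ζ * h2
  · have : NeZero (2 ^ f + 1) := ⟨by omega⟩
    rw [← hζ.card_rootsOfUnity]
    symm
    rw [← Nat.card_congr (rootsOfUnityEquivNthRoots K (2 ^ f + 1)).symm]
    symm
    refine Nat.card_congr (Equiv.ofBijective (fun p => ⟨algebraMap F K p.1.1 + algebraMap F K p.1.2 * ζ, ?_⟩) ⟨?_, ?_⟩)
    · rw [Polynomial.mem_nthRoots (by omega), hnorm, p.2, map_one]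
    · rintro ⟨⟨x, y⟩, h⟩ ⟨⟨x', y'⟩, h'⟩ e
      have := hli2 x y x' y' (by simpa using e)
      simp [this.1, this.2]
    · rintro ⟨z, hz⟩
      rw [Polynomial.mem_nthRoots (by omega)] at hz
      obtain ⟨i, -, hi⟩ := hζ.eq_pow_of_pow_eq_one hz
      refine ⟨⟨seq s i, ?_⟩, ?_⟩
      · apply (algebraMap F K).injective
        rw [← hnorm, ← hseq, hi, hz, map_one]
      · simp [← hseq, hi]
  · intro n
    rw [← hζ.pow_eq_one_iff_dvd, hseq]
    constructor
    · intro h; rw [h]; simp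
    · intro h
      have := hli2 _ _ 1 0 (by rw [h]; simp)
      exact Prod.ext this.1 this.2

theorem field_part (f : ℕ) (hf : 1 < f) (F : Type*) [Field F] [Fintype F] [CharP F 2]
    (hF : Fintype.card F = 2 ^ f) :
    ∃ s : F, s ≠ 0 ∧ s ≠ 1 ∧
      Nat.card {p : F × F // p.1 ^ 2 + s * p.1 * p.2 + p.2 ^ 2 = 1} = 2 ^ f + 1 ∧
      (∀ n, seq s n = (1, 0) ↔ 2 ^ f + 1 ∣ n) := by
  have hne : NeZero ((2 ^ f + 1 : ℕ) : F) := ⟨by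
    push_cast
    rw [show (2 : F) = 0 from CharTwo.two_eq_zero, zero_pow (by omega)]; simp⟩
  obtain ⟨ζ, hζ⟩ := HasEnoughRootsOfUnity.exists_primitiveRoot (AlgebraicClosure F) (2 ^ f + 1)
  exact field_part_aux f hf F hF _ ζ hζ

end
end Sp4aux

namespace Sp4aux
section
open Matrix

theorem two_part (F : Type*) [Field F] [Fintype F] [CharP F 2]
    (h : Matrix.symplecticGroup (Fin 2) F) (N : Matrix (Fin 2 ⊕ Fin 2) (Fin 2 ⊕ Fin 2) F)
    (hN0 : N ≠ 0) (hN : Nᵀ = N) (hJ : N * J (Fin 2) F * N = 0) (hh : h.1 * N * h.1ᵀ = N) :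
    2 ∣ Nat.card (Subgroup.centralizer {h}) := by
  have hneg : ∀ M : Matrix (Fin 2 ⊕ Fin 2) (Fin 2 ⊕ Fin 2) F, -M = M := by
    intro M; ext i j; simp [CharTwo.neg_eq]
  have hadd : ∀ M : Matrix (Fin 2 ⊕ Fin 2) (Fin 2 ⊕ Fin 2) F, M + M = 0 := by
    intro M; ext i j; simp [CharTwo.add_self_eq_zero]
  have hJ2 : J (Fin 2) F * J (Fin 2) F = 1 := by rw [J_squared, hneg]
  have hJt : (J (Fin 2) F)ᵀ = J (Fin 2) F := by rw [J_transpose, hneg]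
  have hm : (1 + N * J (Fin 2) F) ∈ symplecticGroup (Fin 2) F := by
    rw [SymplecticGroup.mem_iff, transpose_add, transpose_mul, transpose_one, hN, hJt]
    calc _ = J (Fin 2) F + (J (Fin 2) F * J (Fin 2) F) * N + N * (J (Fin 2) F * J (Fin 2) F) + N * (J (Fin 2) F * J (Fin 2) F) * J (Fin 2) F * N := by noncomm_ring
      _ = J (Fin 2) F + (N + N) + N * J (Fin 2) F * N := by rw [hJ2]; noncomm_ring
      _ = _ := by rw [hadd, hJ]; simp
  have hhJ := SymplecticGroup.mem_iff'.1 h.2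
  have hcomm : h.1 * (N * J (Fin 2) F) = N * J (Fin 2) F * h.1 := by
    calc h.1 * (N * J (Fin 2) F) = h.1 * N * (h.1ᵀ * J (Fin 2) F * h.1) := by rw [hhJ]; noncomm_ring
      _ = (h.1 * N * h.1ᵀ) * J (Fin 2) F * h.1 := by noncomm_ring
      _ = _ := by rw [hh]
  let t : symplecticGroup (Fin 2) F := ⟨1 + N * J (Fin 2) F, hm⟩
  have ht : t ∈ Subgroup.centralizer {h} := by
    rw [Subgroup.mem_centralizer_singleton_iff]
    apply Subtype.ext
    change (1 + N * J (Fin 2) F) * h.1 = h.1 * (1 + N * J (Fin 2) F)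
    rw [add_mul, mul_add, hcomm]; simp
  have ht2 : t ^ 2 = 1 := by
    apply Subtype.ext
    change (1 + N * J (Fin 2) F) ^ 2 = 1
    calc _ = 1 + (N * J (Fin 2) F + N * J (Fin 2) F) + (N * J (Fin 2) F * N) * J (Fin 2) F := by noncomm_ring
      _ = _ := by rw [hadd, hJ]; simp
  have ht1 : t ≠ 1 := by
    intro e
    have e' : 1 + N * J (Fin 2) F = 1 := congrArg Subtype.val e
    apply hN0
    have : N * J (Fin 2) F = 0 := by simpa using e'
    calc N = N * J (Fin 2) F * J (Fin 2) F := by rw [mul_assoc, hJ2, mul_one]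
      _ = 0 := by rw [this, zero_mul]
  have ho : orderOf (⟨t, ht⟩ : Subgroup.centralizer {h}) = 2 := by
    apply orderOf_eq_prime
    · apply Subtype.ext; exact ht2
    · intro e; exact ht1 (congrArg Subtype.val e)
  have := orderOf_dvd_natCard (⟨t, ht⟩ : Subgroup.centralizer {h})
  rwa [ho] at this

theorem three_var (F : Type*) [Field F] [CharP F 2] (h01 : ∀ x : F, x = 0 ∨ x = 1)
    (a b c d e g : F) : ∃ x y z : F, ¬ (x = 0 ∧ y = 0 ∧ z = 0) ∧
      a * x * x + b * y * y + c * z * z + d * x * y + e * x * z + g * y * z = 0 := by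
  have h2 : (1 : F) + 1 = 0 := CharTwo.add_self_eq_zero 1
  rcases h01 a with rfl | rfl
  · exact ⟨1, 0, 0, by simp⟩
  rcases h01 b with rfl | rfl
  · exact ⟨0, 1, 0, by simp⟩
  rcases h01 c with rfl | rfl
  · exact ⟨0, 0, 1, by simp⟩
  rcases h01 d with rfl | rfl
  · exact ⟨1, 1, 0, by simp [h2]⟩
  rcases h01 e with rfl | rfl
  · exact ⟨1, 0, 1, by simp [h2]⟩
  rcases h01 g with rfl | rfl
  · exact ⟨0, 1, 1, by simp [h2]⟩
  exact ⟨1, 1, 1, by simp, by linear_combination 3 * h2⟩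

theorem f_one (F : Type*) [Field F] [Fintype F] [CharP F 2] (hF : Fintype.card F = 2)
    (h : Matrix.symplecticGroup (Fin 2) F) (h3 : h ^ 3 = 1) :
    2 ∣ Nat.card (Subgroup.centralizer {h}) := by
  classical
  have h01 : ∀ x : F, x = 0 ∨ x = 1 := by
    intro x
    have := FiniteField.pow_card x
    rw [hF] at this
    have : x * (x - 1) = 0 := by linear_combination this
    rcases mul_eq_zero.1 this with h | h
    · exact Or.inl h
    · exact Or.inr (sub_eq_zero.1 h)
  have hM3 : h.1 ^ 3 = 1 := congrArg Subtype.val h3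
  have halt : ∀ v : Fin 2 ⊕ Fin 2 → F, v ⬝ᵥ (J (Fin 2) F *ᵥ v) = 0 := by
    intro v
    simp [J, dotProduct, mulVec, fromBlocks, Fintype.sum_sum_type, Matrix.one_apply]
    ring
  have haltsym : ∀ v w : Fin 2 ⊕ Fin 2 → F, w ⬝ᵥ (J (Fin 2) F *ᵥ v) = v ⬝ᵥ (J (Fin 2) F *ᵥ w) := by
    intro v w
    have := halt (v + w)
    rw [mulVec_add, dotProduct_add, add_dotProduct, add_dotProduct, halt, halt] at this
    rw [← sub_eq_zero, CharTwo.sub_eq_add]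
    simpa using this
  have hprod : ∀ a b c d : Fin 2 ⊕ Fin 2 → F, b ⬝ᵥ (J (Fin 2) F *ᵥ c) = 0 → 
      vecMulVec a b * J (Fin 2) F * vecMulVec c d = 0 := by
    intro a b c d hbc
    rw [mul_assoc, mul_vecMulVec, vecMulVec_mul_vecMulVec, hbc]
    ext; simp [vecMulVec]
  have hconj : ∀ a b : Fin 2 ⊕ Fin 2 → F, h.1 * vecMulVec a b * h.1ᵀ = vecMulVec (h.1 *ᵥ a) (h.1 *ᵥ b) := by
    intro a b
    rw [mul_vecMulVec, vecMulVec_mul, vecMul_transpose]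
  by_cases hfix : ∃ v, v ≠ 0 ∧ h.1 *ᵥ v = v
  · obtain ⟨v, hv0, hv⟩ := hfix
    apply two_part F h (vecMulVec v v)
    · intro e
      apply hv0
      ext i
      have := congrFun (congrFun e i) i
      simpa [vecMulVec_apply] using this
    · rw [transpose_vecMulVec]
    · exact hprod _ _ _ _ (halt v)
    · rw [hconj, hv]
  · push Not at hfix
    have hN : ∀ v, h.1 *ᵥ (h.1 *ᵥ v) = h.1 *ᵥ v + v := by
      intro v
      by_contra hc
      apply hfix (h.1 *ᵥ (h.1 *ᵥ v) + h.1 *ᵥ v + v)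
      · intro e
        apply hc
        ext i
        have := congrFun e i
        simp only [Pi.add_apply, Pi.zero_apply] at this ⊢
        rw [← sub_eq_zero, CharTwo.sub_eq_add, ← this, add_assoc]
      · have : h.1 *ᵥ (h.1 *ᵥ (h.1 *ᵥ v)) = v := by
          rw [mulVec_mulVec, mulVec_mulVec, show h.1 * h.1 * h.1 = h.1 ^ 3 by noncomm_ring, hM3, one_mulVec]
        rw [mulVec_add, mulVec_add, this]; abel
    obtain ⟨v, hv0, hv⟩ : ∃ v, v ≠ 0 ∧ v ⬝ᵥ (J (Fin 2) F *ᵥ (h.1 *ᵥ v)) = 0 := by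
      set C := J (Fin 2) F * h.1 with hC
      obtain ⟨x, y, z, h0, hx⟩ := three_var F h01 (C (.inl 0) (.inl 0)) (C (.inl 1) (.inl 1))
        (C (.inr 0) (.inr 0)) (C (.inl 0) (.inl 1) + C (.inl 1) (.inl 0))
        (C (.inl 0) (.inr 0) + C (.inr 0) (.inl 0)) (C (.inl 1) (.inr 0) + C (.inr 0) (.inl 1))
      refine ⟨Sum.elim ![x, y] ![z, 0], ?_, ?_⟩
      · intro e
        apply h0
        have e1 := congrFun e (.inl 0)
        have e2 := congrFun e (.inl 1)
        have e3 := congrFun e (.inr 0)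
        simp at e1 e2 e3
        exact ⟨e1, e2, e3⟩
      · rw [mulVec_mulVec, ← hC]
        simp [dotProduct, mulVec, Fintype.sum_sum_type]
        linear_combination hx
    set w := h.1 *ᵥ v with hw
    have hww : h.1 *ᵥ w = w + v := hN v
    have hvw : w ≠ v := hfix v hv0
    apply two_part F h (vecMulVec v w + vecMulVec w v)
    · intro e
      have hw0 : w ≠ 0 := by
        intro hw0
        rw [hw0] at hww
        simp at hww
        exact hv0 hww.symm
      obtain ⟨j, hj⟩ := Function.ne_iff.1 hw0
      have hj1 : w j = 1 := (h01 _).resolve_left hj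
      have key : ∀ i, v i + w i * v j = 0 := by
        intro i
        have := congrFun (congrFun e i) j
        simpa [vecMulVec_apply, hj1] using this
      rcases h01 (v j) with h' | h'
      · apply hv0; ext i; simpa [h'] using key i
      · apply hvw; ext i
        have := key i
        rw [h', mul_one] at this
        rw [← sub_eq_zero, CharTwo.sub_eq_add, add_comm, this]
    · rw [transpose_add, transpose_vecMulVec, transpose_vecMulVec, add_comm]
    · rw [add_mul, add_mul, mul_add, mul_add, hprod _ _ _ _ (halt _), hprod _ _ _ _ (halt _),
        hprod _ _ _ _ hv, hprod _ _ _ _ ((haltsym _ _).trans hv)]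
      simp
    · rw [mul_add, add_mul, hconj, hconj, ← hw, hww]
      ext i j
      simp only [Matrix.add_apply, vecMulVec_apply, Pi.add_apply]
      linear_combination (w i * w j) * (CharTwo.two_eq_zero : (2 : F) = 0)
end
end Sp4aux

namespace Sp4aux
section
open Matrix
def MM {F : Type*} [Field F] (s x y z w : F) : Matrix (Fin 2 ⊕ Fin 2) (Fin 2 ⊕ Fin 2) F :=
  fromBlocks !![x, 0; 0, z] !![y, 0; 0, w] !![y, 0; 0, w] !![x + s * y, 0; 0, z + s * w]

theorem MM_mul {F : Type*} [Field F] (s x y z w x' y' z' w' : F) :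
    MM s x y z w * MM s x' y' z' w' = MM s (x * x' + y * y') (x * y' + y * x' + s * y * y')
      (z * z' + w * w') (z * w' + w * z' + s * w * w') := by
  unfold MM
  rw [fromBlocks_multiply]
  congr 1 <;> ext i j <;> fin_cases i <;> fin_cases j <;> simp <;> ring

theorem MM_mem {F : Type*} [Field F] [CharP F 2] (s x y z w : F)
    (h1 : x ^ 2 + s * x * y + y ^ 2 = 1) (h2 : z ^ 2 + s * z * w + w ^ 2 = 1) :
    MM s x y z w ∈ symplecticGroup (Fin 2) F := by
  have h0 : (2 : F) = 0 := CharTwo.two_eq_zero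
  rw [SymplecticGroup.mem_iff]
  unfold MM J
  rw [fromBlocks_transpose, fromBlocks_multiply, fromBlocks_multiply]
  congr 1 <;> ext i j <;> fin_cases i <;> fin_cases j <;>
    simp [Matrix.vecMul, dotProduct, Fin.sum_univ_two] <;> grind

theorem off_zero {F : Type*} [Field F] [CharP F 2] (s : F) (hs0 : s ≠ 0) (hs1 : s ≠ 1)
    (a b c d : F) (h1 : b = a + s * c) (h2 : a + s * b = b + s * d)
    (h3 : d = s * a + (1 + s ^ 2) * c) (h4 : c + s * d = s * b + (1 + s ^ 2) * d) :
    a = 0 ∧ b = 0 ∧ c = 0 ∧ d = 0 := by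
  have h0 : (2 : F) = 0 := CharTwo.two_eq_zero
  have hs : s - 1 ≠ 0 := sub_ne_zero.2 hs1
  subst h1
  subst h3
  have k1 : s * (s - 1) * (a + s * c) = 0 := by grind
  have k2 : a + s * c = 0 := by
    rcases mul_eq_zero.1 k1 with h | h
    · exact absurd h (mul_ne_zero hs0 hs)
    · exact h
  have k3 : a = s * c := by grind
  subst k3
  have k4 : s * (s - 1) * c = 0 := by grind
  have k5 : c = 0 := by
    rcases mul_eq_zero.1 k4 with h | h
    · exact absurd h (mul_ne_zero hs0 hs)
    · exact h
  subst k5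
  simp

theorem MM_of_comm {F : Type*} [Field F] [CharP F 2] (s : F) (hs0 : s ≠ 0) (hs1 : s ≠ 1)
    (g : Matrix (Fin 2 ⊕ Fin 2) (Fin 2 ⊕ Fin 2) F) (hg : g ∈ symplecticGroup (Fin 2) F)
    (hc : g * MM s 0 1 1 s = MM s 0 1 1 s * g) :
    ∃ x y z w, x ^ 2 + s * x * y + y ^ 2 = 1 ∧ z ^ 2 + s * z * w + w ^ 2 = 1 ∧
      g = MM s x y z w := by
  have h0 : (2 : F) = 0 := CharTwo.two_eq_zero
  have H := fun i j => congrFun (congrFun hc i) j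
  simp only [Matrix.mul_apply, Fintype.sum_sum_type, Fin.sum_univ_two, MM] at H
  have e00 := H (.inl 0) (.inl 0)
  have e01 := H (.inl 0) (.inl 1)
  have e02 := H (.inl 0) (.inr 0)
  have e03 := H (.inl 0) (.inr 1)
  have e10 := H (.inl 1) (.inl 0)
  have e11 := H (.inl 1) (.inl 1)
  have e12 := H (.inl 1) (.inr 0)
  have e13 := H (.inl 1) (.inr 1)
  have e20 := H (.inr 0) (.inl 0)
  have e21 := H (.inr 0) (.inl 1)
  have e22 := H (.inr 0) (.inr 0)
  have e23 := H (.inr 0) (.inr 1)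
  have e30 := H (.inr 1) (.inl 0)
  have e31 := H (.inr 1) (.inl 1)
  have e32 := H (.inr 1) (.inr 0)
  have e33 := H (.inr 1) (.inr 1)
  clear H
  simp at e00 e01 e02 e03 e10 e11 e12 e13 e20 e21 e22 e23 e30 e31 e32 e33
  obtain ⟨q1, q2, q3, q4⟩ := off_zero s hs0 hs1 (g (.inl 1) (.inl 0)) (g (.inl 1) (.inr 0))
    (g (.inr 1) (.inl 0)) (g (.inr 1) (.inr 0)) (by linear_combination e10)
    (by linear_combination e12) (by linear_combination e30) (by linear_combination e32)
  obtain ⟨r1, r2, r3, r4⟩ := off_zero s hs0 hs1 (g (.inl 0) (.inl 1)) (g (.inr 0) (.inl 1))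
    (g (.inl 0) (.inr 1)) (g (.inr 0) (.inr 1)) (by linear_combination -e01)
    (by linear_combination -e21) (by linear_combination -e03) (by linear_combination -e23)
  have a1 : g (.inr 0) (.inl 0) = g (.inl 0) (.inr 0) := by linear_combination -e00
  have a2 : g (.inr 0) (.inr 0) = g (.inl 0) (.inl 0) + s * g (.inl 0) (.inr 0) := by
    linear_combination -e02
  have b1 : g (.inr 1) (.inl 1) = g (.inl 1) (.inr 1) := by
    apply mul_left_cancel₀ hs0
    linear_combination -e11
  have b2 : g (.inr 1) (.inr 1) = g (.inl 1) (.inl 1) + s * g (.inl 1) (.inr 1) := by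
    apply mul_left_cancel₀ hs0
    linear_combination -e13
  rw [SymplecticGroup.mem_iff] at hg
  have k1 := congrFun (congrFun hg (.inl 0)) (.inr 0)
  have k2 := congrFun (congrFun hg (.inl 1)) (.inr 1)
  simp [Matrix.mul_apply, Fintype.sum_sum_type, J, Matrix.one_apply, a1, a2, b1, b2, q1, q2, q3, q4, r1, r2, r3, r4] at k1 k2
  refine ⟨g (.inl 0) (.inl 0), g (.inl 0) (.inr 0), g (.inl 1) (.inl 1), g (.inl 1) (.inr 1), ?_, ?_, ?_⟩
  · grind
  · grind
  · ext i j
    rcases i with i | i <;> rcases j with j | j <;> fin_cases i <;> fin_cases j <;>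
      simp [MM, a1, a2, b1, b2, q1, q2, q3, q4, r1, r2, r3, r4]

theorem MM_inj {F : Type*} [Field F] (s x y z w x' y' z' w' : F)
    (h : MM s x y z w = MM s x' y' z' w') : x = x' ∧ y = y' ∧ z = z' ∧ w = w' := by
  have k1 := congrFun (congrFun h (.inl 0)) (.inl 0)
  have k2 := congrFun (congrFun h (.inl 0)) (.inr 0)
  have k3 := congrFun (congrFun h (.inl 1)) (.inl 1)
  have k4 := congrFun (congrFun h (.inl 1)) (.inr 1)
  simp [MM] at k1 k2 k3 k4
  exact ⟨k1, k2, k3, k4⟩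

theorem MM_one {F : Type*} [Field F] (s : F) : MM s 1 0 1 0 = 1 := by
  ext i j
  rcases i with i | i <;> rcases j with j | j <;> fin_cases i <;> fin_cases j <;> simp [MM]

theorem MM_pow {F : Type*} [Field F] [CharP F 2] (s : F) (n : ℕ) :
    (MM s 0 1 1 s) ^ n = MM s (seq s n).1 (seq s n).2 (seq s (2 * n)).1 (seq s (2 * n)).2 := by
  induction n with
  | zero => simp [seq, MM_one]
  | succ n ih =>
    rw [pow_succ, ih, MM_mul, show 2 * (n + 1) = 2 * n + 1 + 1 by ring]
    simp only [seq]
    congr 1 <;> ring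

theorem exists_part {F : Type*} [Field F] [CharP F 2] (s : F) (hs0 : s ≠ 0) (hs1 : s ≠ 1) (q : ℕ)
    (hcard : Nat.card {p : F × F // p.1 ^ 2 + s * p.1 * p.2 + p.2 ^ 2 = 1} = q + 1)
    (hseq : ∀ n, seq s n = (1, 0) ↔ q + 1 ∣ n) :
    ∃ h : Matrix.symplecticGroup (Fin 2) F, orderOf h = q + 1 ∧
        Nat.card (Subgroup.centralizer {h}) = (q + 1) ^ 2 := by
  have h0 : (2 : F) = 0 := CharTwo.two_eq_zero
  have hm : MM s 0 1 1 s ∈ symplecticGroup (Fin 2) F :=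
    MM_mem _ _ _ _ _ (by ring) (by linear_combination s ^ 2 * h0)
  refine ⟨⟨_, hm⟩, ?_, ?_⟩
  · have key : ∀ n, (⟨_, hm⟩ : symplecticGroup (Fin 2) F) ^ n = 1 ↔ q + 1 ∣ n := by
      intro n
      rw [← hseq, Subtype.ext_iff]
      change (MM s 0 1 1 s) ^ n = 1 ↔ _
      rw [MM_pow, ← MM_one s]
      constructor
      · intro h
        obtain ⟨h1, h2, -⟩ := MM_inj _ _ _ _ _ _ _ _ _ h
        exact Prod.ext h1 h2
      · intro h
        have h' : seq s (2 * n) = (1, 0) := by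
          rw [hseq] at h ⊢
          exact h.mul_left 2
        rw [h, h']
    exact Nat.dvd_antisymm (orderOf_dvd_iff_pow_eq_one.2 ((key _).2 dvd_rfl))
      ((key _).1 (pow_orderOf_eq_one _))
  · rw [sq, ← hcard, ← Nat.card_prod]
    symm
    refine Nat.card_congr (Equiv.ofBijective (fun p => ⟨⟨MM s p.1.1.1 p.1.1.2 p.2.1.1 p.2.1.2,
      MM_mem _ _ _ _ _ p.1.2 p.2.2⟩, ?_⟩) ⟨?_, ?_⟩)
    · rw [Subgroup.mem_centralizer_singleton_iff]
      apply Subtype.ext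
      change MM s _ _ _ _ * MM s _ _ _ _ = MM s _ _ _ _ * MM s _ _ _ _
      rw [MM_mul, MM_mul]
      congr 1 <;> ring
    · rintro ⟨⟨⟨x, y⟩, h1⟩, ⟨⟨z, w⟩, h2⟩⟩ ⟨⟨⟨x', y'⟩, h1'⟩, ⟨⟨z', w'⟩, h2'⟩⟩ e
      obtain ⟨rfl, rfl, rfl, rfl⟩ := MM_inj _ _ _ _ _ _ _ _ _ (congrArg (fun t => t.1.1) e)
      rfl
    · rintro ⟨⟨g, hg⟩, hc⟩
      rw [Subgroup.mem_centralizer_singleton_iff] at hc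
      obtain ⟨x, y, z, w, h1, h2, rfl⟩ := MM_of_comm s hs0 hs1 g hg (congrArg Subtype.val hc)
      exact ⟨⟨⟨⟨x, y⟩, h1⟩, ⟨⟨z, w⟩, h2⟩⟩, rfl⟩

end
end Sp4aux


/-- **Elements of order `q + 1` with small centralizer in `Sp₄(2^f)`.** For `q = 2^f`,
`Sp₄(F_q)` contains an element `h` of order `q + 1` whose centralizer has cardinality
exactly `(q + 1)^2` if and only if `f > 1`. -/
theorem Sp4_small_centralizer_iff (f : ℕ) (hf : 0 < f) (q : ℕ) (hq : q = 2 ^ f)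
    (F : Type*) [Field F] [Fintype F] (hF : Fintype.card F = q) :
    (∃ h : Matrix.symplecticGroup (Fin 2) F, orderOf h = q + 1 ∧
        Nat.card (Subgroup.centralizer {h}) = (q + 1) ^ 2) ↔ 1 < f := by
  have h2 : (2 : F) = 0 := by
    have h : ((Fintype.card F : ℕ) : F) = 0 := Nat.cast_card_eq_zero F
    rw [hF, hq] at h
    push_cast at h
    exact pow_eq_zero_iff (by omega) |>.1 h
  have hchar : CharP F 2 := CharTwo.of_one_ne_zero_of_two_eq_zero one_ne_zero h2
  subst hq
  constructor
  · rintro ⟨h, ho, hc⟩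
    by_contra hlt
    obtain rfl : f = 1 := by omega
    have := Sp4aux.f_one F (by simpa using hF) h (by
      have := pow_orderOf_eq_one h
      rw [ho] at this
      exact this)
    rw [hc] at this
    norm_num at this
  · intro hf1
    obtain ⟨s, h0, h1, h3, h4⟩ := Sp4aux.field_part f hf1 F hF
    exact Sp4aux.exists_part s h0 h1 (2 ^ f) h3 h4
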